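/- Let V ⊆ (S_1)^n be an F-subspace of dimension d < n. Define V♭ = {b ∈ M_n(F) : b·ỹ ∈ V}, where b·ỹ ∈ (S_1)^n is the matrix-vector product of b with the vector ỹ of variables, and let (V♭)^⊥ = {a ∈ M_n(F) : Tr(ab) = 0 for all b ∈ V♭} be its orthogonal complement with respect to the trace form. Then V has the ỹ-local membership property if and only if (V♭)^⊥ contains no rank-1 idempotent (i.e., no e ∈ M_n(F) with e² = e and rank e = 1). -/

import Mathlib

open MvPolynomial

/-! Evaluating `b·ỹ` at `a` gives the vector `b a`. A rank-one idempotent is an outer product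
`a cᵀ` with `c · a = 1`, and `Tr (a cᵀ b) = c · (b a)`. So `a cᵀ` lies in `(V♭)^⊥` exactly when the
functional `c` kills every `q(a)` with `q ∈ V`. Since a vector lies outside a subspace iff some
functional vanishing on the subspace takes the value `1` at it, the pairs `(a, c)` witnessing a
failure of local membership are exactly the rank-one idempotents of `(V♭)^⊥`. -/

section RankOne

open Matrix

variable {m n R K : Type*}

theorem trace_vecMulVec_mul [Fintype m] [Fintype n] [CommSemiring R]
    (a : n → R) (c : m → R) (b : Matrix m n R) :
    trace (vecMulVec a c * b) = c ⬝ᵥ b *ᵥ a := by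
  rw [vecMulVec_mul, trace_vecMulVec, dotProduct_comm, dotProduct_mulVec]

variable [Field K]

theorem exists_eq_vecMulVec_of_rank_eq_one [Fintype n] {A : Matrix m n K} (hA : A.rank = 1) :
    ∃ a c, A = vecMulVec a c := by
  classical
  obtain ⟨a, -, h_span⟩ := finrank_eq_one_iff'.1 hA
  choose c hc using fun j =>
    h_span ⟨A *ᵥ Pi.single j 1, LinearMap.mem_range_self A.mulVecLin (Pi.single j 1)⟩
  refine ⟨a, c, ?_⟩
  ext i j
  have h_col : c j • (a : m → K) = A *ᵥ Pi.single j 1 := congrArg Subtype.val (hc j)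
  simpa [vecMulVec_apply, mul_comm] using (congrFun h_col i).symm

theorem rank_vecMulVec_eq_one [Fintype n] {a : m → K} {c : n → K} (ha : a ≠ 0) (hc : c ≠ 0) :
    (vecMulVec a c).rank = 1 := by
  refine (rank_vecMulVec_le a c).antisymm (Nat.one_le_iff_ne_zero.2 fun h_rank => ?_)
  classical
  have h_zero : (vecMulVec a c).mulVecLin = 0 :=
    LinearMap.range_eq_bot.1 (Submodule.finrank_eq_zero.1 h_rank)
  obtain ⟨j, hj⟩ := Function.ne_iff.1 hc
  have h_col : c j • a = 0 := by
    rw [← dotProduct_single_one c j, ← op_smul_eq_smul, ← vecMulVec_mulVec]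
    exact LinearMap.congr_fun h_zero (Pi.single j 1)
  exact smul_ne_zero hj ha h_col

theorem isIdempotentElem_and_rank_eq_one_iff [Fintype n] {e : Matrix n n K} :
    IsIdempotentElem e ∧ e.rank = 1 ↔ ∃ a c, c ⬝ᵥ a = 1 ∧ e = vecMulVec a c := by
  constructor
  · rintro ⟨h_idem, h_rank⟩
    obtain ⟨a, c, rfl⟩ := exists_eq_vecMulVec_of_rank_eq_one h_rank
    have h_ne : vecMulVec a c ≠ 0 := fun h => by simp [h] at h_rank
    have h_smul : (c ⬝ᵥ a) • vecMulVec a c = (1 : K) • vecMulVec a c := by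
      rw [one_smul, ← vecMulVec_smul, ← vecMulVec_mul_vecMulVec]
      exact h_idem
    exact ⟨a, c, smul_left_injective K h_ne h_smul, rfl⟩
  · rintro ⟨a, c, h_dot, rfl⟩
    have ha : a ≠ 0 := by rintro rfl; simp at h_dot
    have hc : c ≠ 0 := by rintro rfl; simp at h_dot
    refine ⟨?_, rank_vecMulVec_eq_one ha hc⟩
    rw [IsIdempotentElem, vecMulVec_mul_vecMulVec, h_dot, one_smul]

theorem mem_span_iff_forall_dotProduct_ne_one [Fintype n] {s : Set (n → K)} {a : n → K} :
    a ∈ Submodule.span K s ↔ ∀ c : n → K, (∀ u ∈ s, c ⬝ᵥ u = 0) → c ⬝ᵥ a ≠ 1 := by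
  classical
  constructor
  · intro ha c hc
    have h_le : Submodule.span K s ≤ LinearMap.ker (dotProductEquiv K n c) :=
      Submodule.span_le.2 hc
    have h_dot : c ⬝ᵥ a = 0 := h_le ha
    simp [h_dot]
  · contrapose!
    intro ha
    obtain ⟨f, hf, hfa⟩ :=
      LinearMap.exists_extend_of_notMem (0 : Submodule.span K s →ₗ[K] K) ha 1
    obtain ⟨c, rfl⟩ := (dotProductEquiv K n).surjective f
    exact ⟨c, fun u hu => LinearMap.congr_fun hf ⟨u, Submodule.subset_span hu⟩, hfa⟩

end RankOne

section LocalMembership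

open Matrix

variable {m n R K : Type*}

/-- The vector `b·ỹ` of linear forms whose coefficients are the rows of `b`. -/
noncomputable def linearForms [CommSemiring R] [Fintype n] (b : Matrix m n R) :
    m → MvPolynomial n R :=
  fun i => ∑ j, C (b i j) * X j

/-- The `ỹ`-local membership property of a set `V` of vectors of polynomials: every point `a` lies
in the span of the values at `a` of the members of `V`. -/
def HasLocalMembership [CommSemiring R] (V : Set (n → MvPolynomial n R)) : Prop :=
  ∀ a : n → R, a ∈ Submodule.span R ((fun q i => eval a (q i)) '' V)

/-- The orthogonal complement of a set of matrices with respect to the trace form `Tr (ab)`. -/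
def traceOrthogonal [CommSemiring R] [Fintype m] [Fintype n] (B : Set (Matrix m n R)) :
    Set (Matrix n m R) :=
  {a | ∀ b ∈ B, trace (a * b) = 0}

theorem eval_linearForms [CommSemiring R] [Fintype n] (b : Matrix m n R) (a : n → R) :
    (fun i => eval a (linearForms b i)) = b *ᵥ a := by
  ext i
  simp [linearForms, mulVec, dotProduct]

theorem exists_linearForms_eq [CommSemiring R] [Fintype n] {q : m → MvPolynomial n R}
    (hq : ∀ i, q i ∈ Submodule.span R (Set.range (X : n → MvPolynomial n R))) :
    ∃ b : Matrix m n R, linearForms b = q := by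
  choose b hb using fun i => (Submodule.mem_span_range_iff_exists_fun R).1 (hq i)
  refine ⟨Matrix.of b, funext fun i => ?_⟩
  simp only [linearForms, of_apply, ← smul_eq_C_mul, hb]

theorem vecMulVec_mem_traceOrthogonal_linearForms_preimage_iff [CommSemiring R] [Fintype m]
    [Fintype n] {V : Set (m → MvPolynomial n R)}
    (hV : ∀ q ∈ V, ∀ i, q i ∈ Submodule.span R (Set.range (X : n → MvPolynomial n R)))
    {a : n → R} {c : m → R} :
    vecMulVec a c ∈ traceOrthogonal (linearForms ⁻¹' V) ↔
      ∀ u ∈ (fun q i => eval a (q i)) '' V, c ⬝ᵥ u = 0 := by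
  rw [Set.forall_mem_image]
  constructor
  · intro h q hq
    obtain ⟨b, rfl⟩ := exists_linearForms_eq (hV q hq)
    rw [eval_linearForms, ← trace_vecMulVec_mul]
    exact h b hq
  · intro h b hb
    rw [trace_vecMulVec_mul, ← eval_linearForms]
    exact h hb

theorem stmt_11_general [Field K] [Fintype n] (V : Set (n → MvPolynomial n K))
    (hV : ∀ q ∈ V, ∀ i, q i ∈ Submodule.span K (Set.range (X : n → MvPolynomial n K))) :
    HasLocalMembership V ↔
      ¬ ∃ e : Matrix n n K,
        IsIdempotentElem e ∧ e.rank = 1 ∧ e ∈ traceOrthogonal (linearForms ⁻¹' V) := by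
  calc HasLocalMembership V
    _ ↔ ∀ a c : n → K, (∀ u ∈ (fun q i => eval a (q i)) '' V, c ⬝ᵥ u = 0) → c ⬝ᵥ a ≠ 1 :=
      forall_congr' fun _ => mem_span_iff_forall_dotProduct_ne_one
    _ ↔ ¬ ∃ a c : n → K,
          c ⬝ᵥ a = 1 ∧ vecMulVec a c ∈ traceOrthogonal (linearForms ⁻¹' V) := by
      simp only [vecMulVec_mem_traceOrthogonal_linearForms_preimage_iff hV]
      grind
    _ ↔ _ := by
      simp only [← and_assoc, isIdempotentElem_and_rank_eq_one_iff]
      grind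

end LocalMembership

theorem stmt_11 (F : Type*) [Field F] [IsAlgClosed F] (n : ℕ) (hn : 3 ≤ n)
    (d : ℕ) (hdn : d < n)
    (V : Submodule F (Fin n → MvPolynomial (Fin n) F))
    (hS1 : ∀ q ∈ V, ∀ i : Fin n, q i ∈ Submodule.span F
      (Set.range (MvPolynomial.X : Fin n → MvPolynomial (Fin n) F)))
    (hdim : Module.finrank F V = d) :
    (∀ a : Fin n → F, a ∈ Submodule.span F
      ((fun q : Fin n → MvPolynomial (Fin n) F => fun i => MvPolynomial.eval a (q i)) ''
        (V : Set (Fin n → MvPolynomial (Fin n) F)))) ↔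
    ¬ ∃ e : Matrix (Fin n) (Fin n) F,
        e * e = e ∧ e.rank = 1 ∧
        ∀ b : Matrix (Fin n) (Fin n) F,
          (fun i : Fin n => ∑ j : Fin n, MvPolynomial.C (b i j) * MvPolynomial.X j) ∈ V →
          Matrix.trace (e * b) = 0 :=
  stmt_11_general (V : Set (Fin n → MvPolynomial (Fin n) F)) hS1
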